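/- arXiv:2603.04512 — 3 statements merged into one kernel-verified Lean document; each statement's English description precedes it below -/
import Mathlib

section
/- Let 𝒞1 and 𝒞2 be classes of frames closed under disjoint unions, each containing a non-trivial frame, let d ∈ {xd, cd}, and let L_i = Log_d 𝒞_i (i = 1,2). Then the fusion L1 ⊗ L2 does not have the global finite d-model property. -/
namespace OneVarML

/-- One-variable first-order modal formulas over modal signature `M`:
atoms `P n` stand for `Pₙ(x)`, `ex φ` stands for `∃x φ`. -/
inductive OV (M : Type) : Type
  | atom : ℕ → OV M
  | neg  : OV M → OV M
  | and  : OV M → OV M → OV M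
  | ex   : OV M → OV M
  | box  : M → OV M → OV M
  deriving DecidableEq

namespace OV

variable {M M' : Type}

/-- implication, defined from `¬`, `∧` -/
def imp (φ ψ : OV M) : OV M := .neg (.and φ (.neg ψ))

/-- disjunction -/
def or (φ ψ : OV M) : OV M := .neg (.and (.neg φ) (.neg ψ))

/-- universal quantifier `∀x φ := ¬∃x¬φ` -/
def all (φ : OV M) : OV M := .neg (.ex (.neg φ))

/-- renaming of modal operators -/
def mapOp (f : M → M') : OV M → OV M'
  | atom n => atom n
  | neg φ => neg (mapOp f φ)
  | and φ ψ => and (mapOp f φ) (mapOp f ψ)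
  | ex φ => ex (mapOp f φ)
  | box m φ => box (f m) (mapOp f φ)

/-- uniform substitution of one-variable formulas for the atoms `Pₙ(x)` -/
def subst (σ : ℕ → OV M) : OV M → OV M
  | atom n => σ n
  | neg φ => neg (subst σ φ)
  | and φ ψ => and (subst σ φ) (subst σ ψ)
  | ex φ => ex (subst σ φ)
  | box m φ => box m (subst σ φ)

/-- formulas without modal operators -/
def boxFree : OV M → Prop
  | atom _ => True
  | neg φ => boxFree φ
  | and φ ψ => boxFree φ ∧ boxFree ψ
  | ex φ => boxFree φ
  | box _ _ => False

/-- classical evaluation of a (box-free) one-variable formula in a classical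
first-order structure with domain `D`, interpretation `I`, at element `a` -/
def clEval (D : Type) (I : ℕ → Set D) : OV M → D → Prop
  | atom n, a => a ∈ I n
  | neg φ, a => ¬ clEval D I φ a
  | and φ ψ, a => clEval D I φ a ∧ clEval D I ψ a
  | ex φ, _ => ∃ b : D, clEval D I φ b
  | box _ _, _ => True

end OV

/-- the one-variable fragment of classical first-order logic: box-free
formulas valid in all classical structures -/
def FOone (M : Type) : Set (OV M) :=
  {φ | φ.boxFree ∧ ∀ (D : Type) (I : ℕ → Set D) (a : D), OV.clEval D I φ a}

/-- A one-variable `M`-logic: includes one-variable classical FO and the K-axioms,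
closed under Modus Ponens, Generalisation, Necessitation and Substitution. -/
structure IsOVLogic {M : Type} (L : Set (OV M)) : Prop where
  fo : FOone M ⊆ L
  kax : ∀ (m : M) (n k : ℕ),
    OV.imp (.box m (OV.imp (.atom n) (.atom k)))
      (OV.imp (.box m (.atom n)) (.box m (.atom k))) ∈ L
  mp : ∀ φ ψ, OV.imp φ ψ ∈ L → φ ∈ L → ψ ∈ L
  gen : ∀ φ, φ ∈ L → OV.all φ ∈ L
  nec : ∀ m φ, φ ∈ L → OV.box m φ ∈ L
  subst : ∀ (σ : ℕ → OV M) φ, φ ∈ L → OV.subst σ φ ∈ L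

/-- A Kripke `M`-frame. -/
structure KFrame (M : Type) where
  W : Type
  ne : Nonempty W
  R : M → W → W → Prop

/-- the two domain semantics: expanding (`xd`) and constant (`cd`) domains -/
inductive DSem : Type
  | xd | cd
  deriving DecidableEq

/-- A Kripke model (with expanding domains) based on a frame `F`:
a family of classical structures over subsets of one big domain `D`,
expanding along all accessibility relations. -/
structure KModel {M : Type} (F : KFrame M) where
  D : Type
  dom : F.W → Set D
  domNe : ∀ w, (dom w).Nonempty
  expand : ∀ (m : M) (w v : F.W), F.R m w v → dom w ⊆ dom v
  I : F.W → ℕ → Set D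

namespace KModel

variable {M : Type} {F : KFrame M}

/-- a `d`-model: for `cd`, all the domains coincide (with the common domain) -/
def IsD (𝔪 : KModel F) (d : DSem) : Prop :=
  d = DSem.cd → ∀ w, 𝔪.dom w = Set.univ

/-- truth of a formula at a world under an assignment (value of `x`) -/
def eval (𝔪 : KModel F) : OV M → F.W → 𝔪.D → Prop
  | .atom n, w, a => a ∈ 𝔪.I w n
  | .neg φ, w, a => ¬ 𝔪.eval φ w a
  | .and φ ψ, w, a => 𝔪.eval φ w a ∧ 𝔪.eval ψ w a
  | .ex φ, w, _ => ∃ b ∈ 𝔪.dom w, 𝔪.eval φ w b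
  | .box m φ, w, a => ∀ v, F.R m w v → 𝔪.eval φ v a

/-- `φ` is true at `w` if it holds under every assignment into the domain of `w` -/
def TrueAt (𝔪 : KModel F) (φ : OV M) (w : F.W) : Prop :=
  ∀ a ∈ 𝔪.dom w, 𝔪.eval φ w a

/-- `φ` is true in the model if it is true at every world -/
def TrueIn (𝔪 : KModel F) (φ : OV M) : Prop := ∀ w, 𝔪.TrueAt φ w

/-- a finite model: finitely many worlds, all domains finite -/
def FiniteM (𝔪 : KModel F) : Prop := Finite F.W ∧ ∀ w, (𝔪.dom w).Finite

end KModel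

/-- `Log_d 𝒞`: the formulas true in every `d`-model based on a frame from `𝒞` -/
def LogD {M : Type} (d : DSem) (C : Set (KFrame M)) : Set (OV M) :=
  {φ | ∀ F ∈ C, ∀ 𝔪 : KModel F, 𝔪.IsD d → 𝔪.TrueIn φ}

/-- disjoint union of a family of frames -/
def KFrame.disjUnion {M ι : Type} (hι : Nonempty ι) (Fs : ι → KFrame M) : KFrame M where
  W := Σ i, (Fs i).W
  ne := ⟨⟨Classical.choice hι, Classical.choice (Fs (Classical.choice hι)).ne⟩⟩
  R := fun m a b => ∃ (i : ι) (w v : (Fs i).W), (Fs i).R m w v ∧ a = ⟨i, w⟩ ∧ b = ⟨i, v⟩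

/-- a class of frames closed under (arbitrary) disjoint unions -/
def ClosedDU {M : Type} (C : Set (KFrame M)) : Prop :=
  ∀ (ι : Type) (hι : Nonempty ι) (Fs : ι → KFrame M),
    (∀ i, Fs i ∈ C) → KFrame.disjUnion hι Fs ∈ C

/-- reduct of a frame along a map of modal signatures -/
def KFrame.reduct {M M' : Type} (f : M' → M) (F : KFrame M) : KFrame M' :=
  ⟨F.W, F.ne, fun m => F.R (f m)⟩

/-- fusion `𝒞1 ⊗ 𝒞2` of classes of frames: the frames over a common set of worlds
whose `M1`-reduct is in `𝒞1` and whose `M2`-reduct is in `𝒞2` -/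
def frameFusion {M1 M2 : Type} (C1 : Set (KFrame M1)) (C2 : Set (KFrame M2)) :
    Set (KFrame (M1 ⊕ M2)) :=
  {F | F.reduct Sum.inl ∈ C1 ∧ F.reduct Sum.inr ∈ C2}

/-- fusion `L1 ⊗ L2` of one-variable logics: the smallest one-variable
`(M1 ⊕ M2)`-logic containing (the copies of) `L1` and `L2` -/
def fusion {M1 M2 : Type} (L1 : Set (OV M1)) (L2 : Set (OV M2)) : Set (OV (M1 ⊕ M2)) :=
  ⋂₀ {L | IsOVLogic L ∧ OV.mapOp Sum.inl '' L1 ⊆ L ∧ OV.mapOp Sum.inr '' L2 ⊆ L}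

/-- local derivability from a logic: closure under Modus Ponens and Generalisation -/
inductive Deriv {M : Type} (L : Set (OV M)) : OV M → Prop
  | ax {φ} : φ ∈ L → Deriv L φ
  | mp {φ ψ} : Deriv L (OV.imp φ ψ) → Deriv L φ → Deriv L ψ
  | gen {φ} : Deriv L φ → Deriv L (OV.all φ)

/-- global consequence `φ ⊢*_L ψ`: `ψ` is in the smallest set including `L ∪ {φ}`
closed under Modus Ponens, Generalisation and Necessitation -/
inductive GlobalConseq {M : Type} (L : Set (OV M)) (φ : OV M) : OV M → Prop
  | ax {ψ} : ψ ∈ L → GlobalConseq L φ ψ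
  | prem : GlobalConseq L φ φ
  | mp {ψ χ} : GlobalConseq L φ (OV.imp ψ χ) → GlobalConseq L φ ψ → GlobalConseq L φ χ
  | gen {ψ} : GlobalConseq L φ ψ → GlobalConseq L φ (OV.all ψ)
  | nec (m : M) {ψ} : GlobalConseq L φ ψ → GlobalConseq L φ (OV.box m ψ)

/-- `L` is `d`-complete for `𝒞` -/
def DComplete {M : Type} (d : DSem) (L : Set (OV M)) (C : Set (KFrame M)) : Prop :=
  L = LogD d C

/-- `L` is globally `d`-complete for `𝒞` -/
def GloballyDComplete {M : Type} (d : DSem) (L : Set (OV M)) (C : Set (KFrame M)) : Prop :=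
  ∀ φ ψ, GlobalConseq L φ ψ ↔
    ∀ F ∈ C, ∀ 𝔪 : KModel F, 𝔪.IsD d → 𝔪.TrueIn φ → 𝔪.TrueIn ψ

/-- a non-trivial frame: some `R_□` relates two distinct worlds -/
def KFrame.Nontrivial {M : Type} (F : KFrame M) : Prop :=
  ∃ (m : M) (w v : F.W), w ≠ v ∧ F.R m w v

/-- the fixed Gödel numbering of one-variable formulas (relative to a numbering
`eM` of modal operators) -/
def OV.encode {M : Type} (eM : M → ℕ) : OV M → ℕ
  | .atom n => Nat.pair 0 n
  | .neg φ => Nat.pair 1 (OV.encode eM φ)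
  | .and φ ψ => Nat.pair 2 (Nat.pair (OV.encode eM φ) (OV.encode eM ψ))
  | .ex φ => Nat.pair 3 (OV.encode eM φ)
  | .box m φ => Nat.pair 4 (Nat.pair (eM m) (OV.encode eM φ))

/-- `L` is decidable: membership in `L` is computable w.r.t. the Gödel numbering -/
def DecidableLogic {M : Type} (eM : M → ℕ) (L : Set (OV M)) : Prop :=
  ComputablePred (fun n : ℕ => ∃ φ ∈ L, OV.encode eM φ = n)

/-- `L` is globally decidable: the global consequence relation is computable -/
def GloballyDecidable {M : Type} (eM : M → ℕ) (L : Set (OV M)) : Prop :=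
  ComputablePred (fun p : ℕ × ℕ =>
    ∃ φ ψ, GlobalConseq L φ ψ ∧ OV.encode eM φ = p.1 ∧ OV.encode eM ψ = p.2)

/-- the (local) finite `d`-model property -/
def FMP {M : Type} (d : DSem) (L : Set (OV M)) : Prop :=
  ∀ φ, φ ∉ L → ∃ (F : KFrame M) (𝔪 : KModel F), 𝔪.IsD d ∧ 𝔪.FiniteM ∧
    (∀ χ ∈ L, 𝔪.TrueIn χ) ∧ ∃ w, ¬ 𝔪.TrueAt φ w

/-- the global finite `d`-model property -/
def GlobalFMP {M : Type} (d : DSem) (L : Set (OV M)) : Prop :=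
  ∀ φ ψ, ¬ GlobalConseq L φ ψ →
    ∃ (F : KFrame M) (𝔪 : KModel F), 𝔪.IsD d ∧ 𝔪.FiniteM ∧
      (∀ χ ∈ L, 𝔪.TrueIn χ) ∧ 𝔪.TrueIn φ ∧ ∃ w, ¬ 𝔪.TrueAt ψ w

end OneVarML

namespace OneVarML

/-!
A premise can force `P₀` to grow strictly along an endless alternation of steps by a modality of
the first signature and a modality of the second one, which is impossible with finitely many
worlds. To see that this premise does not refute the start of such an alternation in the fusion,
take non-trivial frames with edges `w₁ → v₁` and `w₂ → v₂`, and put on the set of all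
`((x, y), n)`, `n : ℤ`, a disjoint union of copies of the first frame (varying `x`) and one of
copies of the second frame (varying `y`), the latter after a permutation that moves
`((w₁, w₂), n + 1)` to `((v₁, v₂), n)` and fixes `((v₁, w₂), n)`. Then
`((w₁, w₂), n) → ((v₁, w₂), n) → ((w₁, w₂), n + 1) → ⋯` climbs forever, and over the constant
domain `ℤ` one reads `P₀` as the set of integers below the height of the world.
-/

variable {M M' M₁ M₂ : Type}

namespace KModel

variable {F : KFrame M} {G : KFrame M'} (𝔪 : KModel F)

theorem eval_imp (φ ψ : OV M) (w : F.W) (a : 𝔪.D) :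
    𝔪.eval (OV.imp φ ψ) w a ↔ (𝔪.eval φ w a → 𝔪.eval ψ w a) := by
  simp only [OV.imp, eval, not_and, not_not]

theorem eval_all (φ : OV M) (w : F.W) (a : 𝔪.D) :
    𝔪.eval (OV.all φ) w a ↔ ∀ b ∈ 𝔪.dom w, 𝔪.eval φ w b := by
  simp only [OV.all, eval, not_exists, not_and, not_not]

/-- The model in which each atom is reinterpreted by the formula that `σ` substitutes for it. -/
def substAtoms (σ : ℕ → OV M) : KModel F where
  D := 𝔪.D
  dom := 𝔪.dom
  domNe := 𝔪.domNe
  expand := 𝔪.expand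
  I w n := {a | 𝔪.eval (σ n) w a}

theorem eval_subst (σ : ℕ → OV M) (φ : OV M) (w : F.W) (a : 𝔪.D) :
    𝔪.eval (OV.subst σ φ) w a ↔ (𝔪.substAtoms σ).eval φ w a := by
  induction φ generalizing w a with
  | atom n => rfl
  | neg φ ih => exact not_congr (ih w a)
  | and φ ψ ihφ ihψ => exact and_congr (ihφ w a) (ihψ w a)
  | ex φ ih => exact exists_congr fun b => and_congr_right' (ih w b)
  | box k φ ih => exact forall₂_congr fun v _ => ih v a

theorem eval_iff_clEval {φ : OV M} (hφ : φ.boxFree) (w : F.W) (a : 𝔪.dom w) :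
    𝔪.eval φ w a ↔ OV.clEval (𝔪.dom w) (fun n => {b | (b : 𝔪.D) ∈ 𝔪.I w n}) φ a := by
  induction φ generalizing a with
  | atom n => rfl
  | neg φ ih => exact not_congr (ih hφ a)
  | and φ ψ ihφ ihψ => exact and_congr (ihφ hφ.1 a) (ihψ hφ.2 a)
  | ex φ ih =>
    refine Iff.trans ?_ (exists_congr fun b => ih hφ b)
    simp only [eval, Subtype.exists, exists_prop]
  | box k φ => exact hφ.elim

/-- Transport of a model along an isomorphism `e` from the `f`-reduct of its frame. -/
def transport (f : M' → M) (e : F.W ≃ G.W)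
    (he : ∀ k x y, F.R (f k) x y ↔ G.R k (e x) (e y)) : KModel G where
  D := 𝔪.D
  dom x := 𝔪.dom (e.symm x)
  domNe x := 𝔪.domNe (e.symm x)
  expand k x y h :=
    𝔪.expand (f k) _ _ ((he k _ _).2 (by simpa only [e.apply_symm_apply] using h))
  I x := 𝔪.I (e.symm x)

theorem transport_dom (f : M' → M) (e : F.W ≃ G.W)
    (he : ∀ k x y, F.R (f k) x y ↔ G.R k (e x) (e y)) (w : F.W) :
    (𝔪.transport f e he).dom (e w) = 𝔪.dom w :=
  congrArg 𝔪.dom (e.symm_apply_apply w)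

theorem eval_transport (f : M' → M) (e : F.W ≃ G.W)
    (he : ∀ k x y, F.R (f k) x y ↔ G.R k (e x) (e y)) (φ : OV M') (w : F.W) (a : 𝔪.D) :
    (𝔪.transport f e he).eval φ (e w) a ↔ 𝔪.eval (OV.mapOp f φ) w a := by
  induction φ generalizing w a with
  | atom n =>
    change a ∈ 𝔪.I (e.symm (e w)) n ↔ a ∈ 𝔪.I w n
    rw [e.symm_apply_apply]
  | neg φ ih => exact not_congr (ih w a)
  | and φ ψ ihφ ihψ => exact and_congr (ihφ w a) (ihψ w a)
  | ex φ ih =>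
    exact exists_congr fun b => and_congr (Set.ext_iff.1 (𝔪.transport_dom f e he w) b) (ih w b)
  | box k φ ih =>
    exact (e.forall_congr fun v => imp_congr (he k w v) (ih v a).symm).symm

end KModel

theorem isOVLogic_LogD (d : DSem) (C : Set (KFrame M)) : IsOVLogic (LogD d C) where
  fo := fun _ ⟨hbox, hval⟩ _ _ 𝔪 _ w a ha =>
    (𝔪.eval_iff_clEval hbox w ⟨a, ha⟩).2 (hval _ _ _)
  kax k n l F _ 𝔪 _ w a _ := by
    simp only [KModel.eval_imp, KModel.eval]
    exact fun himp hn v hv => himp v hv (hn v hv)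
  mp φ ψ himp hφ F hF 𝔪 hd w a ha :=
    (𝔪.eval_imp φ ψ w a).1 (himp F hF 𝔪 hd w a ha) (hφ F hF 𝔪 hd w a ha)
  gen φ hφ F hF 𝔪 hd w a _ := (𝔪.eval_all φ w a).2 (hφ F hF 𝔪 hd w)
  nec k _ hφ F hF 𝔪 hd w a ha v hv := hφ F hF 𝔪 hd v a (𝔪.expand k w v hv ha)
  subst σ φ hφ F hF 𝔪 hd w a ha :=
    (𝔪.eval_subst σ φ w a).2 (hφ F hF (𝔪.substAtoms σ) hd w a ha)

theorem mapOp_image_LogD_subset {F : KFrame M} {G : KFrame M'} (f : M' → M) (e : F.W ≃ G.W)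
    (he : ∀ k x y, F.R (f k) x y ↔ G.R k (e x) (e y)) (d : DSem) {C : Set (KFrame M')}
    (hG : G ∈ C) : OV.mapOp f '' LogD d C ⊆ LogD d {F} := by
  rintro _ ⟨φ, hφ, rfl⟩ _ rfl 𝔪 hd w a ha
  exact (𝔪.eval_transport f e he φ w a).1 (hφ G hG (𝔪.transport f e he) (fun h _ => hd h _)
    (e w) a ((Set.ext_iff.1 (𝔪.transport_dom f e he w) a).2 ha))

theorem fusion_subset {L₁ : Set (OV M₁)} {L₂ : Set (OV M₂)} {L : Set (OV (M₁ ⊕ M₂))}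
    (hL : IsOVLogic L) (h₁ : OV.mapOp Sum.inl '' L₁ ⊆ L) (h₂ : OV.mapOp Sum.inr '' L₂ ⊆ L) :
    fusion L₁ L₂ ⊆ L :=
  Set.sInter_subset_of_mem ⟨hL, h₁, h₂⟩

theorem GlobalConseq.trueIn {F : KFrame M} {𝔪 : KModel F} {L : Set (OV M)} {φ ψ : OV M}
    (h : GlobalConseq L φ ψ) (hL : ∀ χ ∈ L, 𝔪.TrueIn χ) (hφ : 𝔪.TrueIn φ) : 𝔪.TrueIn ψ := by
  induction h with
  | ax h => exact hL _ h
  | prem => exact hφ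
  | mp _ _ himp hψ => exact fun w a ha => (𝔪.eval_imp _ _ w a).1 (himp w a ha) (hψ w a ha)
  | gen _ h => exact fun w a _ => (𝔪.eval_all _ w a).2 (h w)
  | nec k _ h => exact fun w a ha v hv => h v a (𝔪.expand k w v hv ha)

/-! ### Formulas forcing an infinite ascent -/

/-- With worlds satisfying `∃x Pᵢ(x)` called `i`-worlds, this says at an `i`-world that there is a
`j`-world among the `k`-successors, and that the extension of `Pᵣ` grows towards all of these,
gaining some element common to all of them. -/
def OV.ascent (k : M) (i j r : ℕ) : OV M :=
  .imp (.ex (.atom i))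
    (.and (.neg (.box k (.neg (.ex (.atom j)))))
      (.and (.imp (.atom r) (.box k (.imp (.ex (.atom j)) (.atom r))))
        (.ex (.and (.neg (.atom r)) (.box k (.imp (.ex (.atom j)) (.atom r)))))))

/-- Ascents of `P₀` by `k` from `1`-worlds to `2`-worlds and by `l` back from `2`-worlds to
`1`-worlds. -/
def OV.ladder (k l : M) : OV M := .and (.ascent k 1 2 0) (.ascent l 2 1 0)

namespace KModel

variable {F : KFrame M} (𝔪 : KModel F)

/-- The extension at `w` of the predicate `Pᵢ`. -/
def ext (i : ℕ) (w : F.W) : Set 𝔪.D := 𝔪.dom w ∩ 𝔪.I w i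

theorem eval_ascent (k : M) (i j r : ℕ) (w : F.W) (a : 𝔪.D) :
    𝔪.eval (.ascent k i j r) w a ↔ ((𝔪.ext i w).Nonempty →
      (∃ v, F.R k w v ∧ (𝔪.ext j v).Nonempty) ∧
      (a ∈ 𝔪.I w r → ∀ v, F.R k w v → (𝔪.ext j v).Nonempty → a ∈ 𝔪.I v r) ∧
      ∃ c ∈ 𝔪.dom w, c ∉ 𝔪.I w r ∧
        ∀ v, F.R k w v → (𝔪.ext j v).Nonempty → c ∈ 𝔪.I v r) := by
  simp only [OV.ascent, eval_imp, eval, not_forall, not_not, exists_prop, ext, Set.Nonempty,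
    Set.mem_inter_iff]

variable {𝔪}

theorem TrueIn.exists_ext_ssubset {k : M} {i j r : ℕ} (h : 𝔪.TrueIn (.ascent k i j r))
    {w : F.W} (hw : (𝔪.ext i w).Nonempty) :
    ∃ v, (𝔪.ext j v).Nonempty ∧ 𝔪.ext r w ⊂ 𝔪.ext r v := by
  have ascent a (ha : a ∈ 𝔪.dom w) := (𝔪.eval_ascent k i j r w a).1 (h w a ha) hw
  obtain ⟨b, hb, -⟩ := hw
  obtain ⟨⟨v, hwv, hv⟩, -, c, hc, hcw, hcv⟩ := ascent b hb
  have dom_subset : 𝔪.dom w ⊆ 𝔪.dom v := 𝔪.expand k w v hwv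
  have ext_subset : 𝔪.ext r w ⊆ 𝔪.ext r v := fun a ⟨ha, haw⟩ =>
    ⟨dom_subset ha, (ascent a ha).2.1 haw v hwv hv⟩
  exact ⟨v, hv, (Set.ssubset_iff_of_subset ext_subset).2
    ⟨c, ⟨dom_subset hc, hcv v hwv hv⟩, fun hc' => hcw hc'.2⟩⟩

theorem TrueIn.not_ex_of_ladder [Finite F.W] {k l : M} (h : 𝔪.TrueIn (.ladder k l)) :
    𝔪.TrueIn (.neg (.ex (.atom 1))) := by
  intro w _ _ hw
  obtain ⟨x, hx, hmax⟩ :=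
    (Set.toFinite {v | (𝔪.ext 1 v).Nonempty ∨ (𝔪.ext 2 v).Nonempty}).exists_maximalFor
      (𝔪.ext 0) _ ⟨w, Or.inl hw⟩
  obtain ⟨v, hv, hxv⟩ : ∃ v, ((𝔪.ext 1 v).Nonempty ∨ (𝔪.ext 2 v).Nonempty) ∧
      𝔪.ext 0 x ⊂ 𝔪.ext 0 v := by
    rcases hx with hx | hx
    · obtain ⟨v, hv, hxv⟩ :=
        exists_ext_ssubset (fun w a ha => (h w a ha).1 : 𝔪.TrueIn (.ascent k 1 2 0)) hx
      exact ⟨v, Or.inr hv, hxv⟩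
    · obtain ⟨v, hv, hxv⟩ :=
        exists_ext_ssubset (fun w a ha => (h w a ha).2 : 𝔪.TrueIn (.ascent l 2 1 0)) hx
      exact ⟨v, Or.inl hv, hxv⟩
  exact hxv.not_subset (hmax hv hxv.subset)

end KModel

/-! ### Constant-domain models of the ladder -/

/-- Every world of `A` has `k`-successors in `B`, and all of these have a larger height. -/
def KFrame.Ascends (F : KFrame M) {D : Type} [LT D] (k : M) (A B : Set F.W) (height : F.W → D) :
    Prop :=
  ∀ w ∈ A, (∃ v ∈ B, F.R k w v) ∧ ∀ v ∈ B, F.R k w v → height w < height v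

section HeightModel

variable {F : KFrame M} {D : Type} [Preorder D] (A : ℕ → Set F.W) (height : F.W → D)

/-- The model with constant domain the type of heights, in which `P₀` holds of the heights below
that of the world and `Pₙ₊₁` holds of all or no elements, according as the world is in `A n`. -/
def heightModel : KModel F where
  D := D
  dom _ := Set.univ
  domNe _ := let ⟨w⟩ := F.ne; ⟨height w, trivial⟩
  expand _ _ _ _ := subset_rfl
  I
    | w, 0 => Set.Iio (height w)
    | w, n + 1 => {_a | w ∈ A n}

theorem heightModel_ext_succ_nonempty {n : ℕ} {w : F.W} :
    ((heightModel A height).ext (n + 1) w).Nonempty ↔ w ∈ A n :=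
  ⟨fun ⟨_, _, hw⟩ => hw, fun hw => ⟨height w, trivial, hw⟩⟩

theorem heightModel_trueIn_ascent {k : M} {i j : ℕ} (h : F.Ascends k (A i) (A j) height) :
    (heightModel A height).TrueIn (.ascent k (i + 1) (j + 1) 0) := by
  intro w a _
  simp only [KModel.eval_ascent, heightModel_ext_succ_nonempty]
  intro hw
  obtain ⟨⟨v, hv, hwv⟩, hlt⟩ := h w hw
  refine ⟨⟨v, hwv, hv⟩, fun ha u hwu hu => ?_, height w, trivial, lt_irrefl (height w),
    fun u hwu hu => hlt u hu hwu⟩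
  exact lt_trans (α := D) ha (hlt u hu hwu)

end HeightModel

theorem not_globalConseq_ladder {d : DSem} {F : KFrame M} {L : Set (OV M)} (hL : L ⊆ LogD d {F})
    {D : Type} [Preorder D] {k l : M} {A B : Set F.W} {height : F.W → D} (hA : A.Nonempty)
    (hAB : F.Ascends k A B height) (hBA : F.Ascends l B A height) :
    ¬ GlobalConseq L (.ladder k l) (.neg (.ex (.atom 1))) := by
  intro h
  let S : ℕ → Set F.W | 0 => A | _ => B
  let 𝔪 : KModel F := heightModel S height
  have ladder : 𝔪.TrueIn (.ladder k l) := fun w a ha =>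
    ⟨heightModel_trueIn_ascent S height (i := 0) (j := 1) hAB w a ha,
      heightModel_trueIn_ascent S height (i := 1) (j := 0) hBA w a ha⟩
  have not_ex := h.trueIn (fun χ hχ => hL hχ F rfl 𝔪 fun _ _ => rfl) ladder
  obtain ⟨w, hw⟩ := hA
  exact not_ex w (height w) trivial ((heightModel_ext_succ_nonempty S height (n := 0)).2 hw)

/-! ### Splicing disjoint unions of two frames -/

/-- The frame on `W` carrying the relations of `G₁` along `e₁` and those of `G₂` along `e₂`. -/
def KFrame.splice {W : Type} (G₁ : KFrame M₁) (G₂ : KFrame M₂) (e₁ : W ≃ G₁.W) (e₂ : W ≃ G₂.W) :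
    KFrame (M₁ ⊕ M₂) where
  W := W
  ne := e₁.nonempty_congr.2 G₁.ne
  R := Sum.elim (fun k x y => G₁.R k (e₁ x) (e₁ y)) fun k x y => G₂.R k (e₂ x) (e₂ y)

theorem fusion_LogD_subset_LogD_splice (d : DSem) {C₁ : Set (KFrame M₁)} {C₂ : Set (KFrame M₂)}
    {G₁ : KFrame M₁} {G₂ : KFrame M₂} (h₁ : G₁ ∈ C₁) (h₂ : G₂ ∈ C₂) {W : Type}
    (e₁ : W ≃ G₁.W) (e₂ : W ≃ G₂.W) :
    fusion (LogD d C₁) (LogD d C₂) ⊆ LogD d {G₁.splice G₂ e₁ e₂} :=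
  fusion_subset (isOVLogic_LogD d _)
    (mapOp_image_LogD_subset (F := G₁.splice G₂ e₁ e₂) Sum.inl e₁ (fun _ _ _ => Iff.rfl) d h₁)
    (mapOp_image_LogD_subset (F := G₁.splice G₂ e₁ e₂) Sum.inr e₂ (fun _ _ _ => Iff.rfl) d h₂)

theorem KFrame.disjUnion_const_R {ι : Type} (hι : Nonempty ι) (F : KFrame M) (k : M) (i j : ι)
    (w v : F.W) :
    (KFrame.disjUnion hι fun _ => F).R k ⟨i, w⟩ ⟨j, v⟩ ↔ i = j ∧ F.R k w v := by
  constructor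
  · rintro ⟨_, _, _, h, ⟨⟩, ⟨⟩⟩
    exact ⟨rfl, h⟩
  · rintro ⟨rfl, h⟩
    exact ⟨i, w, v, h, rfl, rfl⟩

section ShiftSwap

variable {α : Type*} [DecidableEq α] (a b : α)

/-- The permutation exchanging the lines over `a` and `b`, lowering the line over `a` by `1`. -/
def shiftSwap : Equiv.Perm (α × ℤ) :=
  Equiv.prodShear (Equiv.swap a b) fun c => if c = a then Equiv.subRight 1 else Equiv.refl ℤ

theorem shiftSwap_left (n : ℤ) : shiftSwap a b (a, n) = (b, n - 1) := by
  simp [shiftSwap]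

variable {a b}

theorem shiftSwap_of_ne {c : α} (hca : c ≠ a) (hcb : c ≠ b) (n : ℤ) :
    shiftSwap a b (c, n) = (c, n) := by
  simp [shiftSwap, hca, Equiv.swap_apply_of_ne_of_ne hca hcb]

end ShiftSwap

/-- Triples as worlds of a disjoint union of copies of a frame on `A`. -/
def slicesFst (A B : Type) : (A × B) × ℤ ≃ Σ _ : B × ℤ, A where
  toFun p := ⟨(p.1.2, p.2), p.1.1⟩
  invFun q := ((q.2, q.1.1), q.1.2)
  left_inv _ := rfl
  right_inv _ := rfl

/-- Triples as worlds of a disjoint union of copies of a frame on `B`. -/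
def slicesSnd (A B : Type) : (A × B) × ℤ ≃ Σ _ : A × ℤ, B where
  toFun p := ⟨(p.1.1, p.2), p.1.2⟩
  invFun q := ((q.1.1, q.2), q.1.2)
  left_inv _ := rfl
  right_inv _ := rfl

open Classical in
theorem exists_ladder_frame (d : DSem) {C₁ : Set (KFrame M₁)} {C₂ : Set (KFrame M₂)}
    (hdu₁ : ClosedDU C₁) (hdu₂ : ClosedDU C₂)
    (hn₁ : ∃ F ∈ C₁, F.Nontrivial) (hn₂ : ∃ F ∈ C₂, F.Nontrivial) :
    ∃ (F : KFrame (M₁ ⊕ M₂)) (k l : M₁ ⊕ M₂) (A B : Set F.W) (height : F.W → ℤ),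
      fusion (LogD d C₁) (LogD d C₂) ⊆ LogD d {F} ∧ A.Nonempty ∧
      F.Ascends k A B height ∧ F.Ascends l B A height := by
  obtain ⟨F₁, hF₁, k, w₁, v₁, hne₁, hk⟩ := hn₁
  obtain ⟨F₂, hF₂, l, w₂, v₂, hne₂, hl⟩ := hn₂
  have hι₁ : Nonempty (F₂.W × ℤ) := ⟨(w₂, 0)⟩
  have hι₂ : Nonempty (F₁.W × ℤ) := ⟨(w₁, 0)⟩
  let e₁ := slicesFst F₁.W F₂.W
  let e₂ := (shiftSwap (w₁, w₂) (v₁, v₂)).trans (slicesSnd F₁.W F₂.W)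
  have e₂_w n : e₂ ((w₁, w₂), n) = ⟨(v₁, n - 1), v₂⟩ :=
    congrArg (slicesSnd F₁.W F₂.W) (shiftSwap_left (w₁, w₂) (v₁, v₂) n)
  have e₂_v n : e₂ ((v₁, w₂), n) = ⟨(v₁, n), w₂⟩ :=
    congrArg (slicesSnd F₁.W F₂.W) (shiftSwap_of_ne (by simp [hne₁.symm]) (by simp [hne₂]) n)
  refine ⟨KFrame.splice (.disjUnion hι₁ fun _ => F₁) (.disjUnion hι₂ fun _ => F₂) e₁ e₂,
    .inl k, .inr l, {p | p.1 = (w₁, w₂)}, {p | p.1 = (v₁, w₂)},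
    fun p => 2 * p.2 + if p.1.1 = w₁ then 0 else 1,
    fusion_LogD_subset_LogD_splice d (hdu₁ _ hι₁ _ fun _ => hF₁) (hdu₂ _ hι₂ _ fun _ => hF₂) e₁ e₂,
    ⟨((w₁, w₂), 0), rfl⟩, ?_, ?_⟩
  · have rel_iff n n' := KFrame.disjUnion_const_R hι₁ F₁ k (w₂, n) (w₂, n') w₁ v₁
    rintro ⟨_, n⟩ rfl
    refine ⟨⟨((v₁, w₂), n), rfl, (rel_iff n n).2 ⟨rfl, hk⟩⟩, ?_⟩
    rintro ⟨_, n'⟩ rfl h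
    have : n = n' := congrArg Prod.snd ((rel_iff n n').1 h).1
    simp [this, hne₁.symm]
  · have rel_iff n n' : KFrame.R (.disjUnion hι₂ fun _ => F₂) l (e₂ ((v₁, w₂), n))
        (e₂ ((w₁, w₂), n')) ↔ (v₁, n) = (v₁, n' - 1) ∧ F₂.R l w₂ v₂ := by
      rw [e₂_v, e₂_w, KFrame.disjUnion_const_R]
    rintro ⟨_, n⟩ rfl
    refine ⟨⟨((w₁, w₂), n + 1), rfl, (rel_iff n _).2 ⟨by simp, hl⟩⟩, ?_⟩
    rintro ⟨_, n'⟩ rfl h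
    have : n = n' - 1 := congrArg Prod.snd ((rel_iff n n').1 h).1
    simp only [this, hne₁.symm, if_true, if_false]
    omega

theorem fusion_not_globalFMP_general (d : DSem) (C₁ : Set (KFrame M₁)) (C₂ : Set (KFrame M₂))
    (hdu₁ : ClosedDU C₁) (hdu₂ : ClosedDU C₂)
    (hn₁ : ∃ F ∈ C₁, F.Nontrivial) (hn₂ : ∃ F ∈ C₂, F.Nontrivial) :
    ∃ φ ψ, ¬ GlobalConseq (fusion (LogD d C₁) (LogD d C₂)) φ ψ ∧
      ∀ (F : KFrame (M₁ ⊕ M₂)) (𝔪 : KModel F), Finite F.W → 𝔪.TrueIn φ → 𝔪.TrueIn ψ := by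
  obtain ⟨F, k, l, A, B, height, hF, hA, hAB, hBA⟩ := exists_ladder_frame d hdu₁ hdu₂ hn₁ hn₂
  exact ⟨.ladder k l, .neg (.ex (.atom 1)), not_globalConseq_ladder hF hA hAB hBA,
    fun _ _ _ h => h.not_ex_of_ladder⟩

/-- Failure of the global finite `d`-model property for
non-trivial fusions `Log_d 𝒞1 ⊗ Log_d 𝒞2`. -/
theorem fusion_not_globalFMP {M1 M2 : Type} [Finite M1] [Finite M2] (d : DSem)
    (C1 : Set (KFrame M1)) (C2 : Set (KFrame M2))
    (hdu1 : ClosedDU C1) (hdu2 : ClosedDU C2)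
    (hn1 : ∃ F ∈ C1, F.Nontrivial) (hn2 : ∃ F ∈ C2, F.Nontrivial) :
    ¬ GlobalFMP d (fusion (LogD d C1) (LogD d C2)) := by
  intro hfmp
  obtain ⟨φ, ψ, hnot, hfin⟩ := fusion_not_globalFMP_general d C1 C2 hdu1 hdu2 hn1 hn2
  obtain ⟨F, 𝔪, -, ⟨hW, -⟩, -, hφ, w, hw⟩ := hfmp φ ψ hnot
  exact hw (hfin F 𝔪 hW hφ w)

end OneVarML
end

section
/- Let L be a propositional M-logic and d ∈ {xd, cd}. If [L, S5]^d is Kripke complete, then [L, S5]^d admits E-homogeneous models; if [L, S5]^d is globally Kripke complete, then [L, S5]^d admits E-homogeneous models for global consequence. -/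
/-!
Replace a frame `F` by `F × I`, where `□_E` ignores the `I`-coordinate and all other operators
preserve it. The projection to `F` is a bounded morphism, so models lift along it, and a formula
satisfied in an `E`-class of `F` holds at exactly `|I|` points of the corresponding class of `F × I`
once `|I|` is infinite and at least `|F|`. The frames for `[L, S5]^d` are closed under this
operation: in the language of `L`, the new frame is a disjoint union of copies of `F`, and the
first-order conditions corresponding to S5 and to the commutativity axioms are inherited.
Since there are only set-many formulas, one cardinal bounds a choice of refuting frames.
-/

namespace PropML

/-- propositional modal formulas over modal signature `M` -/
inductive PF (M : Type) : Type
  | atom : ℕ → PF M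
  | neg : PF M → PF M
  | and : PF M → PF M → PF M
  | box : M → PF M → PF M
  deriving DecidableEq

namespace PF

variable {M M' : Type}

def imp (φ ψ : PF M) : PF M := .neg (.and φ (.neg ψ))

def or (φ ψ : PF M) : PF M := .neg (.and (.neg φ) (.neg ψ))

def dia (m : M) (φ : PF M) : PF M := .neg (.box m (.neg φ))

/-- `⊥` -/
def bot : PF M := .and (.atom 0) (.neg (.atom 0))

/-- renaming of modal operators -/
def mapOp (f : M → M') : PF M → PF M'
  | atom n => atom n
  | neg φ => neg (mapOp f φ)
  | and φ ψ => and (mapOp f φ) (mapOp f ψ)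
  | box m φ => box (f m) (mapOp f φ)

/-- uniform substitution -/
def substP (σ : ℕ → PF M) : PF M → PF M
  | atom n => σ n
  | neg φ => neg (substP σ φ)
  | and φ ψ => and (substP σ φ) (substP σ ψ)
  | box m φ => box m (substP σ φ)

end PF

/-- evaluation treating atoms and boxed formulas as atomic; used to define
the classical tautologies of the modal language -/
def tautEval {M : Type} (v : PF M → Prop) : PF M → Prop
  | .atom n => v (.atom n)
  | .neg φ => ¬ tautEval v φ
  | .and φ ψ => tautEval v φ ∧ tautEval v ψ
  | .box m φ => v (.box m φ)

/-- classical tautologies of the propositional modal language -/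
def IsTaut {M : Type} (φ : PF M) : Prop := ∀ v, tautEval v φ

/-- a (normal) propositional modal `M`-logic -/
structure IsPLogic {M : Type} (L : Set (PF M)) : Prop where
  taut : ∀ φ, IsTaut φ → φ ∈ L
  kax : ∀ (m : M) (n k : ℕ),
    PF.imp (.box m (PF.imp (.atom n) (.atom k)))
      (PF.imp (.box m (.atom n)) (.box m (.atom k))) ∈ L
  mp : ∀ φ ψ, PF.imp φ ψ ∈ L → φ ∈ L → ψ ∈ L
  nec : ∀ m φ, φ ∈ L → PF.box m φ ∈ L
  subst : ∀ (σ : ℕ → PF M) φ, φ ∈ L → PF.substP σ φ ∈ L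

/-- A Kripke `M`-frame. -/
structure KFrame (M : Type) where
  W : Type
  ne : Nonempty W
  R : M → W → W → Prop

/-- truth of a propositional formula in a Kripke model `(F, V)` -/
def PVal {M : Type} {F : KFrame M} (V : ℕ → F.W → Prop) : PF M → F.W → Prop
  | .atom n, w => V n w
  | .neg φ, w => ¬ PVal V φ w
  | .and φ ψ, w => PVal V φ w ∧ PVal V ψ w
  | .box m φ, w => ∀ v, F.R m w v → PVal V φ v

/-- validity of a propositional formula on a frame -/
def PValid {M : Type} (F : KFrame M) (φ : PF M) : Prop :=
  ∀ (V : ℕ → F.W → Prop) (w : F.W), PVal (F := F) V φ w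

/-- `F` is a frame for the logic `L` -/
def FrameFor {M : Type} (F : KFrame M) (L : Set (PF M)) : Prop :=
  ∀ φ ∈ L, PValid F φ

/-- `L` is Kripke complete -/
def KComplete {M : Type} (L : Set (PF M)) : Prop :=
  ∀ φ, (∀ F : KFrame M, FrameFor F L → PValid F φ) → φ ∈ L

/-- global consequence `φ ⊢*_L ψ`: `ψ` is in the smallest set including
`L ∪ {φ}` closed under Modus Ponens and Necessitation -/
inductive PGlobal {M : Type} (L : Set (PF M)) (φ : PF M) : PF M → Prop
  | ax {ψ} : ψ ∈ L → PGlobal L φ ψ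
  | prem : PGlobal L φ φ
  | mp {ψ χ} : PGlobal L φ (PF.imp ψ χ) → PGlobal L φ ψ → PGlobal L φ χ
  | nec (m : M) {ψ} : PGlobal L φ ψ → PGlobal L φ (PF.box m ψ)

/-- `L` is globally Kripke complete -/
def GloballyKComplete {M : Type} (L : Set (PF M)) : Prop :=
  ∀ φ ψ, PGlobal L φ ψ ↔
    ∀ F : KFrame M, FrameFor F L → ∀ V : ℕ → F.W → Prop,
      (∀ w, PVal (F := F) V φ w) → ∀ w, PVal (F := F) V ψ w

/-- the S5 axioms for the operator `e` -/
def ContainsS5 {M : Type} (L : Set (PF M)) (e : M) : Prop :=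
  PF.imp (.box e (.atom 0)) (.atom 0) ∈ L ∧
  PF.imp (.box e (.atom 0)) (.box e (.box e (.atom 0))) ∈ L ∧
  PF.imp (PF.dia e (.atom 0)) (.box e (PF.dia e (.atom 0))) ∈ L

/-- an `(E, κ)`-homogeneous model: in each `E`-equivalence class, each formula
is satisfied either nowhere or at exactly `κ` worlds -/
def EHomog {M : Type} {F : KFrame M} (e : M) (V : ℕ → F.W → Prop)
    (κ : Cardinal) : Prop :=
  ∀ (w : F.W) (φ : PF M),
    Cardinal.mk {v : F.W // F.R e w v ∧ PVal (F := F) V φ v} = 0 ∨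
    Cardinal.mk {v : F.W // F.R e w v ∧ PVal (F := F) V φ v} = κ

/-- `L` admits `E`-homogeneous models -/
def AdmitsEHomog {M : Type} (e : M) (L : Set (PF M)) : Prop :=
  ∃ κ : Cardinal, Cardinal.aleph0 ≤ κ ∧ ∀ κ', κ ≤ κ' → ∀ φ ∉ L,
    ∃ F : KFrame M, FrameFor F L ∧ ∃ V : ℕ → F.W → Prop,
      EHomog e V κ' ∧ ∃ w, ¬ PVal (F := F) V φ w

/-- `L` admits `E`-homogeneous models for global consequence -/
def AdmitsEHomogGlobal {M : Type} (e : M) (L : Set (PF M)) : Prop :=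
  ∃ κ : Cardinal, Cardinal.aleph0 ≤ κ ∧ ∀ κ', κ ≤ κ' → ∀ φ ψ, ¬ PGlobal L φ ψ →
    ∃ F : KFrame M, FrameFor F L ∧ ∃ V : ℕ → F.W → Prop,
      EHomog e V κ' ∧ (∀ w, PVal (F := F) V φ w) ∧ ∃ w, ¬ PVal (F := F) V ψ w

/-- the fusion `L1 ⊗_E L2` of two logics sharing the S5 operator `□_E`
(designated by `none` in each component signature): the smallest propositional
modal logic in the combined language (with the single shared `□_E`) including
`L1 ∪ L2` -/
def fusionE {M1 M2 : Type} (L1 : Set (PF (Option M1))) (L2 : Set (PF (Option M2))) :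
    Set (PF (Option (M1 ⊕ M2))) :=
  ⋂₀ {L | IsPLogic L ∧
    PF.mapOp (Option.map Sum.inl) '' L1 ⊆ L ∧
    PF.mapOp (Option.map Sum.inr) '' L2 ⊆ L}

/-- the propositional modal logic `S5` (of the single operator `□_E`) -/
def S5L : Set (PF Unit) := ⋂₀ {L | IsPLogic L ∧ ContainsS5 L ()}

/-- the left commutativity axiom `□□_E p → □_E □ p` -/
def lcom {M : Type} (m : M) : PF (Option M) :=
  PF.imp (.box (some m) (.box none (.atom 0))) (.box none (.box (some m) (.atom 0)))

/-- the right commutativity axiom `□_E □ p → □ □_E p` -/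
def rcom {M : Type} (m : M) : PF (Option M) :=
  PF.imp (.box none (.box (some m) (.atom 0))) (.box (some m) (.box none (.atom 0)))

/-- the semicommutator `[L, S5]^xd = L ⊗ S5 + {lcom_□ : □ ∈ M}`
(`□_E` is `none`) -/
def LS5xd {M : Type} (L : Set (PF M)) : Set (PF (Option M)) :=
  ⋂₀ {L' | IsPLogic L' ∧
    PF.mapOp Option.some '' L ⊆ L' ∧
    PF.mapOp (fun _ => (none : Option M)) '' S5L ⊆ L' ∧
    ∀ m : M, lcom m ∈ L'}

/-- the commutator `[L, S5]^cd = [L, S5]^xd + {rcom_□ : □ ∈ M}` -/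
def LS5cd {M : Type} (L : Set (PF M)) : Set (PF (Option M)) :=
  ⋂₀ {L' | IsPLogic L' ∧ LS5xd L ⊆ L' ∧ ∀ m : M, rcom m ∈ L'}

/-- the two domain semantics: expanding (`xd`) and constant (`cd`) domains -/
inductive DSem : Type
  | xd | cd
  deriving DecidableEq

/-- `[L, S5]^d` -/
def LS5 {M : Type} (d : DSem) (L : Set (PF M)) : Set (PF (Option M)) :=
  match d with
  | .xd => LS5xd L
  | .cd => LS5cd L

/-- the fixed Gödel numbering of propositional formulas (relative to a
numbering `eM` of the modal operators) -/
def PF.encode {M : Type} (eM : M → ℕ) : PF M → ℕ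
  | .atom n => Nat.pair 0 n
  | .neg φ => Nat.pair 1 (PF.encode eM φ)
  | .and φ ψ => Nat.pair 2 (Nat.pair (PF.encode eM φ) (PF.encode eM ψ))
  | .box m φ => Nat.pair 3 (Nat.pair (eM m) (PF.encode eM φ))

/-- decidability of a propositional logic w.r.t. the fixed Gödel numbering -/
def DecidableP {M : Type} (eM : M → ℕ) (L : Set (PF M)) : Prop :=
  ComputablePred (fun n : ℕ => ∃ φ ∈ L, PF.encode eM φ = n)

/-- decidability of the global consequence relation -/
def GloballyDecidableP {M : Type} (eM : M → ℕ) (L : Set (PF M)) : Prop :=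
  ComputablePred (fun p : ℕ × ℕ =>
    ∃ φ ψ, PGlobal L φ ψ ∧ PF.encode eM φ = p.1 ∧ PF.encode eM ψ = p.2)

end PropML

namespace PropML

section Semantics

variable {M M' : Type} {F G : KFrame M}

theorem pVal_imp (V : ℕ → F.W → Prop) (φ ψ : PF M) (w : F.W) :
    PVal V (PF.imp φ ψ) w ↔ (PVal V φ w → PVal V ψ w) := by
  simp only [PF.imp, PVal, not_and, not_not]

theorem pVal_dia (V : ℕ → F.W → Prop) (m : M) (φ : PF M) (w : F.W) :
    PVal V (PF.dia m φ) w ↔ ∃ v, F.R m w v ∧ PVal V φ v := by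
  simp only [PF.dia, PVal, not_forall, not_not, exists_prop]

theorem pVal_substP (V : ℕ → F.W → Prop) (σ : ℕ → PF M) (φ : PF M) (w : F.W) :
    PVal V (PF.substP σ φ) w ↔ PVal (F := F) (fun n v => PVal V (σ n) v) φ w := by
  induction φ generalizing w with
  | atom n => rfl
  | neg φ ih => exact not_congr (ih w)
  | and φ ψ ihφ ihψ => exact and_congr (ihφ w) (ihψ w)
  | box m φ ih => exact forall₂_congr fun v _ => ih v

theorem tautEval_pVal (V : ℕ → F.W → Prop) (φ : PF M) (w : F.W) :
    tautEval (fun ψ => PVal V ψ w) φ ↔ PVal V φ w := by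
  induction φ with
  | atom n => rfl
  | neg φ ih => exact not_congr ih
  | and φ ψ ihφ ihψ => exact and_congr ihφ ihψ
  | box m φ => rfl

/-- The logic of a frame: the set of formulas valid on it. `FrameFor F L` unfolds to
`L ⊆ F.logic`. -/
def KFrame.logic (F : KFrame M) : Set (PF M) := {φ | PValid F φ}

theorem KFrame.isPLogic_logic (F : KFrame M) : IsPLogic F.logic where
  taut φ hφ V w := (tautEval_pVal V φ w).1 (hφ _)
  kax m n k V w := by
    simp only [pVal_imp]
    exact fun himp hn v hv => (pVal_imp _ _ _ _).1 (himp v hv) (hn v hv)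
  mp φ ψ himp hφ V w := (pVal_imp _ _ _ _).1 (himp V w) (hφ V w)
  nec _ _ hφ V _ v _ := hφ V v
  subst σ φ hφ V w := (pVal_substP V σ φ w).2 (hφ _ w)

/-- The reduct of an `M'`-frame along a map of signatures `f : M → M'`; it interprets `m` as
`f m`. -/
def KFrame.reduct (F : KFrame M') (f : M → M') : KFrame M where
  W := F.W
  ne := F.ne
  R m := F.R (f m)

theorem pVal_mapOp (F : KFrame M') (f : M → M') (V : ℕ → F.W → Prop) (φ : PF M) (w : F.W) :
    PVal V (PF.mapOp f φ) w ↔ PVal (F := F.reduct f) V φ w := by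
  induction φ generalizing w with
  | atom n => rfl
  | neg φ ih => exact not_congr (ih w)
  | and φ ψ ihφ ihψ => exact and_congr (ihφ w) (ihψ w)
  | box m φ ih => exact forall₂_congr fun v _ => ih v

theorem frameFor_image_mapOp_iff (F : KFrame M') (f : M → M') (L : Set (PF M)) :
    FrameFor F (PF.mapOp f '' L) ↔ FrameFor (F.reduct f) L :=
  Set.forall_mem_image.trans <|
    forall₂_congr fun φ _ => forall₂_congr fun V w => pVal_mapOp F f V φ w

/-- Bounded morphisms (p-morphisms) of Kripke frames. Surjectivity is not included. -/
structure IsBoundedMorphism (F G : KFrame M) (f : F.W → G.W) : Prop where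
  forth : ∀ {m w v}, F.R m w v → G.R m (f w) (f v)
  back : ∀ {m w u}, G.R m (f w) u → ∃ v, F.R m w v ∧ f v = u

theorem IsBoundedMorphism.pVal_iff {f : F.W → G.W} (hf : IsBoundedMorphism F G f)
    (V : ℕ → G.W → Prop) (φ : PF M) (w : F.W) :
    PVal (F := F) (fun n v => V n (f v)) φ w ↔ PVal V φ (f w) := by
  induction φ generalizing w with
  | atom n => rfl
  | neg φ ih => exact not_congr (ih w)
  | and φ ψ ihφ ihψ => exact and_congr (ihφ w) (ihψ w)
  | box m φ ih =>
    constructor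
    · intro h u hu
      obtain ⟨v, hv, rfl⟩ := hf.back hu
      exact (ih v).1 (h v hv)
    · exact fun h v hv => (ih v).2 (h (f v) (hf.forth hv))

theorem PValid.of_boundedMorphism_cover {φ : PF M} (hφ : PValid F φ)
    (hcover : ∀ u : G.W, ∃ f, IsBoundedMorphism F G f ∧ u ∈ Set.range f) : PValid G φ := by
  intro V u
  obtain ⟨f, hf, w, rfl⟩ := hcover u
  exact (hf.pVal_iff V φ w).1 (hφ _ w)

end Semantics

section Correspondence

open Relation (Comp)

variable {M : Type} (F : KFrame M)

theorem pValid_box_imp_iff_refl (e : M) :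
    PValid F (PF.imp (.box e (.atom 0)) (.atom 0)) ↔ ∀ w, F.R e w w := by
  simp only [PValid, pVal_imp]
  exact ⟨fun h w => h (fun _ => F.R e w) w fun _ => id, fun h _ w hbox => hbox w (h w)⟩

theorem pValid_box_imp_box_box_iff_trans (e : M) :
    PValid F (PF.imp (.box e (.atom 0)) (.box e (.box e (.atom 0)))) ↔
      ∀ w v u, F.R e w v → F.R e v u → F.R e w u := by
  simp only [PValid, pVal_imp]
  exact ⟨fun h w v u hwv hvu => h (fun _ => F.R e w) w (fun _ => id) v hwv u hvu,
    fun h _ w hbox v hwv u hvu => hbox u (h w v u hwv hvu)⟩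

theorem pValid_dia_imp_box_dia_iff_euclidean (e : M) :
    PValid F (PF.imp (PF.dia e (.atom 0)) (.box e (PF.dia e (.atom 0)))) ↔
      ∀ w v u, F.R e w v → F.R e w u → F.R e v u := by
  simp only [PValid, pVal_imp]
  constructor
  · intro h w v u hwv hwu
    have hdia := h (fun _ => (· = u)) w ((pVal_dia _ _ _ _).2 ⟨u, hwu, rfl⟩) v hwv
    obtain ⟨x, hvx, rfl : x = u⟩ := (pVal_dia _ _ _ _).1 hdia
    exact hvx
  · intro h V w hdia v hwv
    obtain ⟨u, hwu, hu⟩ := (pVal_dia _ _ _ _).1 hdia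
    exact (pVal_dia _ _ _ _).2 ⟨u, h w v u hwv hwu, hu⟩

theorem containsS5_logic_iff_equivalence (e : M) :
    ContainsS5 F.logic e ↔ Equivalence (F.R e) := by
  refine (and_congr (pValid_box_imp_iff_refl F e)
    (and_congr (pValid_box_imp_box_box_iff_trans F e)
      (pValid_dia_imp_box_dia_iff_euclidean F e))).trans ?_
  constructor
  · rintro ⟨hrefl, htrans, heucl⟩
    exact ⟨hrefl, fun {w v} hwv => heucl w v w hwv (hrefl w), fun {w v u} => htrans w v u⟩
  · exact fun h => ⟨h.refl, fun _ _ _ => h.trans, fun _ _ _ hwv => h.trans (h.symm hwv)⟩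

theorem pValid_box_comm_iff (a b : M) :
    PValid F (PF.imp (.box a (.box b (.atom 0))) (.box b (.box a (.atom 0)))) ↔
      Comp (F.R b) (F.R a) ≤ Comp (F.R a) (F.R b) := by
  simp only [PValid, pVal_imp]
  constructor
  · rintro h w u ⟨v, hwv, hvu⟩
    exact h (fun _ => Comp (F.R a) (F.R b) w) w (fun t hwt x htx => ⟨t, hwt, htx⟩) v hwv u hvu
  · intro h V w hbox v hwv u hvu
    obtain ⟨t, hwt, htu⟩ := h w u ⟨v, hwv, hvu⟩
    exact hbox t hwt u htu

end Correspondence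

section FramesForLS5

open Relation (Comp)

theorem frameFor_S5L_iff (F : KFrame Unit) : FrameFor F S5L ↔ Equivalence (F.R ()) := by
  rw [← containsS5_logic_iff_equivalence]
  constructor
  · exact fun h => ⟨h _ fun _ hL => hL.2.1, h _ fun _ hL => hL.2.2.1, h _ fun _ hL => hL.2.2.2⟩
  · exact fun h => Set.sInter_subset_of_mem ⟨F.isPLogic_logic, h⟩

variable {M : Type} {L : Set (PF M)} {K : Set (PF (Option M))}

theorem LS5xd_subset_iff (hK : IsPLogic K) :
    LS5xd L ⊆ K ↔ PF.mapOp some '' L ⊆ K ∧ PF.mapOp (fun _ => none) '' S5L ⊆ K ∧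
      ∀ m, lcom m ∈ K := by
  constructor
  · exact fun h => ⟨fun _ hφ => h fun _ hL => hL.2.1 hφ, fun _ hφ => h fun _ hL => hL.2.2.1 hφ,
      fun m => h fun _ hL => hL.2.2.2 m⟩
  · exact fun h => Set.sInter_subset_of_mem ⟨hK, h⟩

theorem LS5cd_subset_iff (hK : IsPLogic K) :
    LS5cd L ⊆ K ↔ LS5xd L ⊆ K ∧ ∀ m, rcom m ∈ K := by
  constructor
  · exact fun h => ⟨fun _ hφ => h fun _ hL => hL.2.1 hφ, fun m => h fun _ hL => hL.2.2 m⟩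
  · exact fun h => Set.sInter_subset_of_mem ⟨hK, h⟩

theorem frameFor_LS5xd_iff (F : KFrame (Option M)) :
    FrameFor F (LS5xd L) ↔ FrameFor (F.reduct some) L ∧ Equivalence (F.R none) ∧
      ∀ m, Comp (F.R none) (F.R (some m)) ≤ Comp (F.R (some m)) (F.R none) :=
  (LS5xd_subset_iff F.isPLogic_logic).trans <|
    and_congr (frameFor_image_mapOp_iff F some L) <|
      and_congr ((frameFor_image_mapOp_iff F _ S5L).trans (frameFor_S5L_iff _)) <|
        forall_congr' fun m => pValid_box_comm_iff F (some m) none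

theorem frameFor_LS5cd_iff (F : KFrame (Option M)) :
    FrameFor F (LS5cd L) ↔ FrameFor F (LS5xd L) ∧
      ∀ m, Comp (F.R (some m)) (F.R none) ≤ Comp (F.R none) (F.R (some m)) :=
  (LS5cd_subset_iff F.isPLogic_logic).trans <|
    and_congr_right' <| forall_congr' fun m => pValid_box_comm_iff F none (some m)

end FramesForLS5

section BlowUp

open Relation (Comp)

variable {M M' : Type} {F : KFrame M} {e : M} {I : Type} [Nonempty I]

/-- The blow-up of `F` by an index set `I`: every point is replaced by `I` many copies, the
operator `e` does not see the index and every other operator preserves it. -/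
def KFrame.blowUp (F : KFrame M) (e : M) (I : Type) [Nonempty I] : KFrame M where
  W := F.W × I
  ne := have := F.ne; inferInstance
  R m x y := F.R m x.1 y.1 ∧ (m ≠ e → x.2 = y.2)

theorem KFrame.blowUp_R_self (x y : F.W × I) : (F.blowUp e I).R e x y ↔ F.R e x.1 y.1 :=
  and_iff_left fun h => (h rfl).elim

theorem isBoundedMorphism_blowUp_fst : IsBoundedMorphism (F.blowUp e I) F Prod.fst where
  forth h := h.1
  back {_ x u} h := ⟨(u, x.2), ⟨h, fun _ => rfl⟩, rfl⟩

theorem isBoundedMorphism_reduct_blowUp {f : M' → M} (hf : ∀ m, f m ≠ e) (i : I) :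
    IsBoundedMorphism (F.reduct f) ((F.blowUp e I).reduct f) (fun w => (w, i)) where
  forth h := ⟨h, fun _ => rfl⟩
  back {m _ u} h := ⟨u.1, h.1, Prod.ext rfl (h.2 (hf m))⟩

theorem FrameFor.reduct_blowUp {f : M' → M} {L : Set (PF M')} (h : FrameFor (F.reduct f) L)
    (hf : ∀ m, f m ≠ e) : FrameFor ((F.blowUp e I).reduct f) L :=
  fun φ hφ => (h φ hφ).of_boundedMorphism_cover fun u =>
    ⟨_, isBoundedMorphism_reduct_blowUp hf u.2, u.1, rfl⟩

theorem equivalence_blowUp (h : Equivalence (F.R e)) : Equivalence ((F.blowUp e I).R e) := by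
  have hR : (F.blowUp e I).R e = (F.R e).onFun Prod.fst := by
    ext x y
    exact KFrame.blowUp_R_self x y
  rw [hR]
  exact h.comap Prod.fst

theorem comp_blowUp_le_left {m : M} (h : Comp (F.R e) (F.R m) ≤ Comp (F.R m) (F.R e)) :
    Comp ((F.blowUp e I).R e) ((F.blowUp e I).R m) ≤
      Comp ((F.blowUp e I).R m) ((F.blowUp e I).R e) := by
  rintro x z ⟨y, hxy, hyz⟩
  obtain ⟨t, hxt, htz⟩ := h x.1 z.1 ⟨y.1, hxy.1, hyz.1⟩
  exact ⟨(t, x.2), ⟨hxt, fun _ => rfl⟩, (KFrame.blowUp_R_self _ _).2 htz⟩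

theorem comp_blowUp_le_right {m : M} (h : Comp (F.R m) (F.R e) ≤ Comp (F.R e) (F.R m)) :
    Comp ((F.blowUp e I).R m) ((F.blowUp e I).R e) ≤
      Comp ((F.blowUp e I).R e) ((F.blowUp e I).R m) := by
  rintro x z ⟨y, hxy, hyz⟩
  obtain ⟨t, hxt, htz⟩ := h x.1 z.1 ⟨y.1, hxy.1, hyz.1⟩
  exact ⟨(t, z.2), (KFrame.blowUp_R_self _ _).2 hxt, htz, fun _ => rfl⟩

theorem eHomog_blowUp (V : ℕ → F.W → Prop) (hI : Cardinal.aleph0 ≤ Cardinal.mk I)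
    (hF : Cardinal.mk F.W ≤ Cardinal.mk I) :
    EHomog (F := F.blowUp e I) e (fun n x => V n x.1) (Cardinal.mk I) := by
  intro x φ
  let p (v : F.W) : Prop := F.R e x.1 v ∧ PVal V φ v
  let classEquiv : {y : (F.blowUp e I).W // (F.blowUp e I).R e x y ∧
      PVal (F := F.blowUp e I) (fun n x => V n x.1) φ y} ≃ {v // p v} × I :=
    (Equiv.subtypeEquivRight fun y => and_congr (KFrame.blowUp_R_self x y)
      (isBoundedMorphism_blowUp_fst.pVal_iff V φ y)).trans
        (Equiv.prodSubtypeFstEquivSubtypeProd (p := p))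
  rw [classEquiv.cardinal_eq, Cardinal.mk_prod, Cardinal.lift_id, Cardinal.lift_id]
  by_cases hS : Cardinal.mk {v // p v} = 0
  · exact .inl (by rw [hS, zero_mul])
  · exact .inr (Cardinal.mul_eq_right hI ((Cardinal.mk_subtype_le _).trans hF) hS)

/-- Closure of the class of frames for `Λ` under blow-ups along the operator `e`. -/
def BlowUpStable (e : M) (Λ : Set (PF M)) : Prop :=
  ∀ (F : KFrame M) (I : Type) [Nonempty I], FrameFor F Λ → FrameFor (F.blowUp e I) Λ

theorem blowUpStable_LS5xd (L : Set (PF M)) : BlowUpStable none (LS5xd L) := by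
  intro F I _ hF
  obtain ⟨hL, hE, hcomm⟩ := (frameFor_LS5xd_iff F).1 hF
  exact (frameFor_LS5xd_iff _).2 ⟨hL.reduct_blowUp Option.some_ne_none,
    equivalence_blowUp hE, fun m => comp_blowUp_le_left (hcomm m)⟩

theorem blowUpStable_LS5cd (L : Set (PF M)) : BlowUpStable none (LS5cd L) := by
  intro F I _ hF
  obtain ⟨hxd, hcomm⟩ := (frameFor_LS5cd_iff F).1 hF
  exact (frameFor_LS5cd_iff _).2
    ⟨blowUpStable_LS5xd L F I hxd, fun m => comp_blowUp_le_right (hcomm m)⟩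

theorem blowUpStable_LS5 (d : DSem) (L : Set (PF M)) : BlowUpStable none (LS5 d L) :=
  match d with
  | .xd => blowUpStable_LS5xd L
  | .cd => blowUpStable_LS5cd L

end BlowUp

section Homogeneous

variable {M : Type} {e : M} {Λ : Set (PF M)}

theorem BlowUpStable.exists_eHomog (hΛ : BlowUpStable e Λ) {F : KFrame M} (hF : FrameFor F Λ)
    (V : ℕ → F.W → Prop) {κ : Cardinal} (hκ : Cardinal.aleph0 ≤ κ) (hFκ : Cardinal.mk F.W ≤ κ) :
    ∃ G : KFrame M, FrameFor G Λ ∧ ∃ V' : ℕ → G.W → Prop, EHomog e V' κ ∧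
      ∃ f : G.W → F.W, f.Surjective ∧ ∀ φ x, PVal V' φ x ↔ PVal V φ (f x) := by
  induction κ using Cardinal.inductionOn with | _ I
  have : Nonempty I := (Cardinal.infinite_iff.2 hκ).nonempty
  exact ⟨F.blowUp e I, hΛ F I hF, _, eHomog_blowUp V hκ hFκ, Prod.fst, Prod.fst_surjective,
    isBoundedMorphism_blowUp_fst.pVal_iff V⟩

theorem exists_cardinal_bound_of_exists_frame {ι : Type} {P : ι → KFrame M → Prop}
    (h : ∀ i, ∃ F, P i F) :
    ∃ κ, Cardinal.aleph0 ≤ κ ∧ ∀ i, ∃ F, Cardinal.mk F.W ≤ κ ∧ P i F := by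
  choose F hF using h
  obtain ⟨κ, hκ⟩ : BddAbove (Set.range fun i => Cardinal.mk (F i).W) :=
    Cardinal.bddAbove_of_small
  exact ⟨max Cardinal.aleph0 κ, le_max_left _ _,
    fun i => ⟨F i, le_max_of_le_right (hκ ⟨i, rfl⟩), hF i⟩⟩

theorem KComplete.admitsEHomog (hc : KComplete Λ) (hΛ : BlowUpStable e Λ) :
    AdmitsEHomog e Λ := by
  have refutable (φ : {φ // φ ∉ Λ}) : ∃ F : KFrame M, FrameFor F Λ ∧
      ∃ V : ℕ → F.W → Prop, ∃ w, ¬ PVal V φ.1 w := by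
    by_contra! h
    exact φ.2 (hc φ h)
  obtain ⟨κ₀, hκ₀, hbound⟩ := exists_cardinal_bound_of_exists_frame refutable
  refine ⟨κ₀, hκ₀, fun κ hκ φ hφ => ?_⟩
  obtain ⟨F, hFκ, hF, V, w, hw⟩ := hbound ⟨φ, hφ⟩
  obtain ⟨G, hG, V', hhom, f, hf, htruth⟩ := hΛ.exists_eHomog hF V (hκ₀.trans hκ) (hFκ.trans hκ)
  obtain ⟨x, rfl⟩ := hf w
  exact ⟨G, hG, V', hhom, x, fun hx => hw ((htruth φ x).1 hx)⟩

theorem GloballyKComplete.admitsEHomogGlobal (hc : GloballyKComplete Λ)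
    (hΛ : BlowUpStable e Λ) : AdmitsEHomogGlobal e Λ := by
  have refutable (p : {p : PF M × PF M // ¬ PGlobal Λ p.1 p.2}) :
      ∃ F : KFrame M, FrameFor F Λ ∧ ∃ V : ℕ → F.W → Prop,
        (∀ w, PVal V p.1.1 w) ∧ ∃ w, ¬ PVal V p.1.2 w := by
    by_contra! h
    exact p.2 ((hc _ _).2 h)
  obtain ⟨κ₀, hκ₀, hbound⟩ := exists_cardinal_bound_of_exists_frame refutable
  refine ⟨κ₀, hκ₀, fun κ hκ φ ψ hφψ => ?_⟩
  obtain ⟨F, hFκ, hF, V, hφ, w, hw⟩ := hbound ⟨(φ, ψ), hφψ⟩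
  obtain ⟨G, hG, V', hhom, f, hf, htruth⟩ := hΛ.exists_eHomog hF V (hκ₀.trans hκ) (hFκ.trans hκ)
  obtain ⟨x, rfl⟩ := hf w
  exact ⟨G, hG, V', hhom, fun y => (htruth φ y).2 (hφ (f y)), x,
    fun hx => hw ((htruth ψ x).1 hx)⟩

theorem LS5_admits_homogeneous_general (hΛ : BlowUpStable e Λ) :
    (KComplete Λ → AdmitsEHomog e Λ) ∧ (GloballyKComplete Λ → AdmitsEHomogGlobal e Λ) :=
  ⟨fun hc => hc.admitsEHomog hΛ, fun hc => hc.admitsEHomogGlobal hΛ⟩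

end Homogeneous

/-- If `[L, S5]^d` is (globally) Kripke complete, then it
admits `E`-homogeneous models (for global consequence); here `□_E` is the
operator `none` of the extended signature. -/
theorem LS5_admits_homogeneous {M : Type} (d : DSem) (L : Set (PF M))
    (hL : IsPLogic L) :
    (KComplete (LS5 d L) → AdmitsEHomog (none : Option M) (LS5 d L)) ∧
    (GloballyKComplete (LS5 d L) →
      AdmitsEHomogGlobal (none : Option M) (LS5 d L)) :=
  LS5_admits_homogeneous_general (blowUpStable_LS5 d L)

end PropML
end

section
/- Let L be a propositional M-logic and L' = [L, S5]^xd. For every propositional (M ∪ {□_E})-formula β in which every occurrence of every proposition letter lies within the scope of some occurrence of □_E, the formula β → □_E β belongs to L'. -/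
namespace PropML

/-- every occurrence of every proposition letter lies within the scope of some
occurrence of `□_E` (`□_E` is the operator `none`) -/
def Guarded {M : Type} : PF (Option M) → Prop
  | .atom _ => False
  | .neg φ => Guarded φ
  | .and φ ψ => Guarded φ ∧ Guarded ψ
  | .box none _ => True
  | .box (some _) φ => Guarded φ

section NormalLogic

variable {M : Type} {K : Set (PF M)} {e : M} {φ ψ χ : PF M}

theorem tautEval_imp {v : PF M → Prop} :
    tautEval v (PF.imp φ ψ) ↔ (tautEval v φ → tautEval v ψ) := by
  simp only [PF.imp, tautEval]
  tauto

namespace IsPLogic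

theorem mem_of_tautEval (hK : IsPLogic K) (hφ : φ ∈ K)
    (h : ∀ v, tautEval v φ → tautEval v ψ) : ψ ∈ K :=
  hK.mp φ ψ (hK.taut _ fun v ↦ tautEval_imp.2 (h v)) hφ

theorem mem_of_tautEval₂ (hK : IsPLogic K) (hφ : φ ∈ K) (hψ : ψ ∈ K)
    (h : ∀ v, tautEval v φ → tautEval v ψ → tautEval v χ) : χ ∈ K :=
  hK.mp ψ χ (hK.mem_of_tautEval hφ fun v hv ↦ tautEval_imp.2 (h v hv)) hψ

theorem imp_trans (hK : IsPLogic K) (hφψ : PF.imp φ ψ ∈ K) (hψχ : PF.imp ψ χ ∈ K) :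
    PF.imp φ χ ∈ K :=
  hK.mem_of_tautEval₂ hφψ hψχ fun _ h₁ h₂ ↦
    tautEval_imp.2 (tautEval_imp.1 h₂ ∘ tautEval_imp.1 h₁)

theorem box_imp_distrib (hK : IsPLogic K) (m : M) (φ ψ : PF M) :
    PF.imp (.box m (PF.imp φ ψ)) (PF.imp (.box m φ) (.box m ψ)) ∈ K :=
  hK.subst (fun n ↦ if n = 0 then φ else ψ) _ (hK.kax m 0 1)

theorem box_mono (hK : IsPLogic K) (m : M) (h : PF.imp φ ψ ∈ K) :
    PF.imp (.box m φ) (.box m ψ) ∈ K :=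
  hK.mp _ _ (hK.box_imp_distrib m φ ψ) (hK.nec m _ h)

theorem box_imp_box_and (hK : IsPLogic K) (m : M) (φ ψ : PF M) :
    PF.imp (.box m φ) (PF.imp (.box m ψ) (.box m (.and φ ψ))) ∈ K := by
  have and_intro : PF.imp φ (PF.imp ψ (.and φ ψ)) ∈ K :=
    hK.taut _ fun v ↦ by
      simp only [tautEval_imp, tautEval]
      exact And.intro
  exact hK.imp_trans (hK.box_mono m and_intro) (hK.box_imp_distrib m ψ _)

theorem imp_box_and (hK : IsPLogic K) (hφ : PF.imp φ (.box e φ) ∈ K)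
    (hψ : PF.imp ψ (.box e ψ) ∈ K) : PF.imp (.and φ ψ) (.box e (.and φ ψ)) ∈ K := by
  refine hK.mem_of_tautEval₂ (hK.imp_trans hφ (hK.box_imp_box_and e φ ψ)) hψ fun v ↦ ?_
  simp only [tautEval_imp, tautEval]
  tauto

theorem imp_box_box_of_commute (hK : IsPLogic K) {m : M} (hφ : PF.imp φ (.box e φ) ∈ K)
    (hcomm : PF.imp (.box m (.box e φ)) (.box e (.box m φ)) ∈ K) :
    PF.imp (.box m φ) (.box e (.box m φ)) ∈ K :=
  hK.imp_trans (hK.box_mono m hφ) hcomm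

theorem box_imp_self (hK : IsPLogic K) (hS5 : ContainsS5 K e) (φ : PF M) :
    PF.imp (.box e φ) φ ∈ K :=
  hK.subst (fun _ ↦ φ) _ hS5.1

theorem box_imp_box_box (hK : IsPLogic K) (hS5 : ContainsS5 K e) (φ : PF M) :
    PF.imp (.box e φ) (.box e (.box e φ)) ∈ K :=
  hK.subst (fun _ ↦ φ) _ hS5.2.1

theorem dia_imp_box_dia (hK : IsPLogic K) (hS5 : ContainsS5 K e) (φ : PF M) :
    PF.imp (PF.dia e φ) (.box e (PF.dia e φ)) ∈ K :=
  hK.subst (fun _ ↦ φ) _ hS5.2.2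

theorem imp_dia_self (hK : IsPLogic K) (hS5 : ContainsS5 K e) (φ : PF M) :
    PF.imp φ (PF.dia e φ) ∈ K := by
  refine hK.mem_of_tautEval (hK.box_imp_self hS5 (.neg φ)) fun v ↦ ?_
  simp only [PF.dia, tautEval_imp, tautEval]
  exact imp_not_comm.1

theorem dia_neg_imp_neg (hK : IsPLogic K) (hφ : PF.imp φ (.box e φ) ∈ K) :
    PF.imp (PF.dia e (.neg φ)) (.neg φ) ∈ K := by
  have not_not_intro : PF.imp φ (.neg (.neg φ)) ∈ K :=
    hK.taut _ fun v ↦ tautEval_imp.2 not_not_intro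
  refine hK.mem_of_tautEval (hK.imp_trans hφ (hK.box_mono e not_not_intro)) fun v ↦ ?_
  simp only [PF.dia, tautEval_imp, tautEval]
  exact mt

theorem imp_box_neg (hK : IsPLogic K) (hS5 : ContainsS5 K e) (hφ : PF.imp φ (.box e φ) ∈ K) :
    PF.imp (.neg φ) (.box e (.neg φ)) ∈ K :=
  hK.imp_trans (hK.imp_dia_self hS5 (.neg φ)) <|
    hK.imp_trans (hK.dia_imp_box_dia hS5 (.neg φ)) <|
      hK.box_mono e (hK.dia_neg_imp_neg hφ)

end IsPLogic

theorem isPLogic_sInter {S : Set (Set (PF M))} (hS : ∀ K ∈ S, IsPLogic K) :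
    IsPLogic (⋂₀ S) where
  taut φ hφ K hK := (hS K hK).taut φ hφ
  kax m n k K hK := (hS K hK).kax m n k
  mp φ ψ hφψ hφ K hK := (hS K hK).mp φ ψ (hφψ K hK) (hφ K hK)
  nec m φ hφ K hK := (hS K hK).nec m φ (hφ K hK)
  subst σ φ hφ K hK := (hS K hK).subst σ φ (hφ K hK)

theorem ContainsS5.of_mapOp_image_subset {N : Type} {K' : Set (PF N)} {f : M → N}
    (hS5 : ContainsS5 K e) (hsub : PF.mapOp f '' K ⊆ K') : ContainsS5 K' (f e) :=
  ⟨hsub ⟨_, hS5.1, rfl⟩, hsub ⟨_, hS5.2.1, rfl⟩, hsub ⟨_, hS5.2.2, rfl⟩⟩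

end NormalLogic

section Semicommutator

variable {M : Type}

theorem containsS5_S5L : ContainsS5 S5L () :=
  ⟨fun _ hK ↦ hK.2.1, fun _ hK ↦ hK.2.2.1, fun _ hK ↦ hK.2.2.2⟩

theorem isPLogic_LS5xd (L : Set (PF M)) : IsPLogic (LS5xd L) :=
  isPLogic_sInter fun _ hK ↦ hK.1

theorem containsS5_LS5xd (L : Set (PF M)) : ContainsS5 (LS5xd L) none :=
  containsS5_S5L.of_mapOp_image_subset (f := fun _ ↦ none) fun _ hφ _ hK ↦ hK.2.2.1 hφ

theorem lcom_mem_LS5xd (L : Set (PF M)) (m : M) : lcom m ∈ LS5xd L :=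
  fun _ hK ↦ hK.2.2.2 m

theorem guarded_imp_boxE_general {K : Set (PF (Option M))} (hK : IsPLogic K)
    (hS5 : ContainsS5 K none) (hlcom : ∀ m, lcom m ∈ K) {β : PF (Option M)} (hβ : Guarded β) :
    PF.imp β (.box none β) ∈ K := by
  induction β with
  | atom n => exact hβ.elim
  | neg φ ih => exact hK.imp_box_neg hS5 (ih hβ)
  | and φ ψ ihφ ihψ => exact hK.imp_box_and (ihφ hβ.1) (ihψ hβ.2)
  | box m φ ih =>
    cases m with
    | none => exact hK.box_imp_box_box hS5 φ
    | some m => exact hK.imp_box_box_of_commute (ih hβ) (hK.subst (fun _ ↦ φ) _ (hlcom m))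

end Semicommutator

/-- For every propositional `M`-logic `L` and every formula
`β` of the extended language all of whose proposition letters occur within the
scope of `□_E`, the formula `β → □_E β` belongs to `[L, S5]^xd`. -/
theorem guarded_imp_boxE {M : Type} (L : Set (PF M)) (hL : IsPLogic L)
    (β : PF (Option M)) (hβ : Guarded β) :
    PF.imp β (.box none β) ∈ LS5xd L :=
  guarded_imp_boxE_general (isPLogic_LS5xd L) (containsS5_LS5xd L) (lcom_mem_LS5xd L) hβ

end PropML
end
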